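/- Let U and V be finite-dimensional vector spaces over a field K, with dim V ≥ 2 if K has more than 2 elements, and dim V ≥ 3 if K has exactly 2 elements. Then every quasi-range-compatible additive group homomorphism F : L(U,V) → V is local. -/

import Mathlib

lemma qrc_ind {K V : Type*} [Field K] [AddCommGroup V] [Module K V] {e w : V}
    (he : e ≠ 0) (hw : w ∉ Submodule.span K {e}) (α β : K) (h : α • w + β • e = 0) :
    α = 0 ∧ β = 0 := by
  have hα : α = 0 := by
    by_contra hα
    apply hw
    rw [Submodule.mem_span_singleton]
    refine ⟨-(α⁻¹ * β), ?_⟩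
    have h' : α • w = -(β • e) := eq_neg_of_add_eq_zero_left h
    have : w = α⁻¹ • (α • w) := by rw [smul_smul, inv_mul_cancel₀ hα, one_smul]
    rw [this, h', smul_neg, smul_smul, neg_smul]
  subst hα
  refine ⟨rfl, ?_⟩
  simpa [he] using h

lemma qrc_not_mem {K V : Type*} [Field K] [AddCommGroup V] [Module K V] {e w : V}
    (hw : w ∉ Submodule.span K {e}) (t x : K) (ht : t ≠ 0) :
    t • w + x • e ∉ Submodule.span K {e} := by
  intro h
  apply hw
  have h2 : x • e ∈ Submodule.span K {e} :=
    Submodule.smul_mem _ _ (Submodule.mem_span_singleton_self e)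
  have h3 := (Submodule.add_mem_iff_left _ h2).1 h
  exact (Submodule.smul_mem_iff _ ht).1 h3

lemma qrc_caseA {K V : Type*} [Field K] [AddCommGroup V] [Module K V] {e w : V}
    (he : e ≠ 0) (hw : w ∉ Submodule.span K {e}) (G : V →+ V)
    (hG : ∀ v, v ∉ Submodule.span K {e} → ∃ a : K, G v = a • v)
    (t : K) (ht0 : t ≠ 0) (ht1 : t ≠ 1) :
    ∃ a : K, G w = a • w ∧ ∀ x : K, G (x • e) = a • x • e := by
  obtain ⟨a, ha⟩ := hG w hw
  obtain ⟨a', ha'⟩ := hG (t • w) (by simpa using qrc_not_mem hw t 0 ht0)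
  have key : ∀ x : K, x ≠ 0 → ∃ b : K, (1 - t) * b = a - a' * t ∧
      G (x • e) = (b - a) • w + (b * x) • e := by
    intro x hx
    obtain ⟨b, hb⟩ := hG _ (qrc_not_mem hw 1 x one_ne_zero)
    obtain ⟨c, hc⟩ := hG _ (qrc_not_mem hw t x ht0)
    rw [map_add, one_smul, ha] at hb
    rw [map_add, ha'] at hc
    have e1 : G (x • e) = (b - a) • w + (b * x) • e := by
      rw [eq_sub_of_add_eq' hb]; module
    have e2 : G (x • e) = ((c - a') * t) • w + (c * x) • e := by
      rw [eq_sub_of_add_eq' hc]; module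
    have h0 : ((b - a) - (c - a') * t) • w + ((b - c) * x) • e = 0 := by
      have := e1.symm.trans e2
      rw [← sub_eq_zero] at this
      rw [← this]; module
    obtain ⟨h3, h4⟩ := qrc_ind he hw _ _ h0
    have hbc : b = c := by
      rcases mul_eq_zero.1 h4 with h | h
      · exact sub_eq_zero.1 h
      · exact absurd h hx
    subst hbc
    exact ⟨b, by linear_combination h3, e1⟩
  have h1t : (1 - t) ≠ 0 := sub_ne_zero.2 (Ne.symm ht1)
  obtain ⟨b, hb, hb1⟩ := key 1 one_ne_zero
  have key2 : ∀ x : K, x ≠ 0 → G (x • e) = (b - a) • w + (b * x) • e := by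
    intro x hx
    obtain ⟨c, hc, hc1⟩ := key x hx
    have : c = b := mul_left_cancel₀ h1t (hc.trans hb.symm)
    rw [hc1, this]
  have hba : b = a := by
    have q1 := key2 1 one_ne_zero
    have q2 := key2 t ht0
    have q3 := key2 (1 - t) h1t
    rw [sub_smul, map_sub, q1, q2] at q3
    have : (b - a) • w + (0 : K) • e = 0 := by
      rw [← sub_eq_zero] at q3
      rw [← neg_eq_zero, ← q3]; module
    exact sub_eq_zero.1 (qrc_ind he hw _ _ this).1
  subst hba
  refine ⟨b, ha, fun x => ?_⟩
  by_cases hx : x = 0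
  · simp [hx]
  · rw [key2 x hx]; module

lemma qrc_caseB {K V : Type*} [Field K] [AddCommGroup V] [Module K V] [FiniteDimensional K V]
    {e : V} (he : e ≠ 0) (G : V →+ V) (hd : 3 ≤ Module.finrank K V)
    (hG : ∀ v, v ∉ Submodule.span K {e} → ∃ a : K, G v = a • v) :
    ∃ a : K, ∀ v, v ∉ Submodule.span K {e} → G v = a • v := by
  -- two vectors independent modulo `e`
  have step : ∀ v w : V, v ∉ Submodule.span K {e} → w ∉ Submodule.span K {e, v} →
      ∀ a b : K, G v = a • v → G w = b • w → a = b := by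
    intro v w hv hw a b ha hb
    have hwe : v + w ∉ Submodule.span K {e} := by
      intro h
      apply hw
      have h1 : v + w ∈ Submodule.span K {e, v} :=
        Submodule.span_mono (by simp) h
      have h2 : v ∈ Submodule.span K {e, v} := Submodule.subset_span (by simp)
      exact (Submodule.add_mem_iff_right _ h2).1 h1
    obtain ⟨c, hc⟩ := hG _ hwe
    have hv0 : v ≠ 0 := fun h => hv (h ▸ Submodule.zero_mem _)
    have hwv : w ∉ Submodule.span K {v} := fun h =>
      hw (Submodule.span_mono (by simp) h)
    rw [map_add, ha, hb] at hc
    have : (b - c) • w + (a - c) • v = 0 := by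
      rw [← sub_eq_zero] at hc
      rw [← hc]; module
    obtain ⟨h1, h2⟩ := qrc_ind hv0 hwv _ _ this
    rw [sub_eq_zero.1 h1, sub_eq_zero.1 h2]
  have ex : ∀ v : V, ∃ u, u ∉ Submodule.span K {e, v} := by
    intro v
    by_contra! h
    have htop : Submodule.span K {e, v} = ⊤ := by
      rw [eq_top_iff]; intro x _; exact h x
    classical
    have h1 := finrank_span_finset_le_card (R := K) ({e, v} : Finset V)
    have h2 : ({e, v} : Finset V).card ≤ 2 := Finset.card_le_two
    unfold Set.finrank at h1
    rw [Finset.coe_pair, htop, finrank_top] at h1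
    omega
  have sub : ∀ v u : V, u ∉ Submodule.span K {e, v} → u ∉ Submodule.span K {e} :=
    fun v u h h' => h (Submodule.span_mono (by simp) h')
  obtain ⟨v, hv'⟩ := ex 0
  have hv := sub _ _ hv'
  obtain ⟨a, ha⟩ := hG v hv
  refine ⟨a, fun w hw => ?_⟩
  obtain ⟨b, hb⟩ := hG w hw
  suffices a = b by rw [hb, this]
  by_cases hwv : w ∈ Submodule.span K {e, v}
  · obtain ⟨u, hu⟩ := ex v
    obtain ⟨c, hc⟩ := hG u (sub _ _ hu)
    have hu2 : u ∉ Submodule.span K {e, w} := by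
      intro h
      apply hu
      refine (Submodule.span_le.2 ?_) h
      rintro x (rfl | rfl)
      · exact Submodule.subset_span (by simp)
      · exact hwv
    exact (step v u hv hu a c ha hc).trans (step w u hw hu2 b c hb hc).symm
  · exact step v w hv hwv a b ha hb

lemma qrc_scal {K V : Type*} [Field K] [AddCommGroup V] [Module K V] [FiniteDimensional K V]
    (h1 : 2 < Cardinal.mk K → 2 ≤ Module.finrank K V)
    (h2 : Nat.card K = 2 → 3 ≤ Module.finrank K V)
    {e : V} (he : e ≠ 0) (G : V →+ V)
    (hG : ∀ v, v ∉ Submodule.span K {e} → ∃ a : K, G v = a • v) :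
    ∃ a : K, ∀ v, G v = a • v := by
  have ex : 2 ≤ Module.finrank K V → ∃ w, w ∉ Submodule.span K {e} := by
    intro hd
    by_contra! h
    have htop : Submodule.span K {e} = ⊤ := by
      rw [eq_top_iff]; intro x _; exact h x
    have := finrank_span_singleton (K := K) he
    rw [htop, finrank_top] at this
    omega
  by_cases ht : ∃ t : K, t ≠ 0 ∧ t ≠ 1
  · obtain ⟨t, ht0, ht1⟩ := ht
    have hc : 2 < Cardinal.mk K := by
      by_contra hlt
      rw [not_lt] at hlt
      have hfin : Cardinal.mk K < Cardinal.aleph0 := lt_of_le_of_lt hlt (Cardinal.natCast_lt_aleph0 (n := 2))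
      have : Finite K := Cardinal.lt_aleph0_iff_finite.1 hfin
      have : Fintype K := Fintype.ofFinite K
      classical
      rw [Cardinal.mk_fintype] at hlt
      have hlt' : Fintype.card K ≤ 2 := by exact_mod_cast hlt
      have h3 : ({0, 1, t} : Finset K).card = 3 :=
        Finset.card_eq_three.2 ⟨0, 1, t, zero_ne_one, ht0.symm, ht1.symm, rfl⟩
      have := Finset.card_le_univ ({0, 1, t} : Finset K)
      omega
    obtain ⟨w, hw⟩ := ex (h1 hc)
    obtain ⟨a, ha, hae⟩ := qrc_caseA he hw G hG t ht0 ht1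
    refine ⟨a, fun v => ?_⟩
    by_cases hv : v ∈ Submodule.span K {e}
    · obtain ⟨x, rfl⟩ := Submodule.mem_span_singleton.1 hv
      exact hae x
    · obtain ⟨b, hb, hbe⟩ := qrc_caseA he hv G hG t ht0 ht1
      have h3 := (hae 1).symm.trans (hbe 1)
      rw [one_smul] at h3
      rw [hb, smul_left_injective K he h3]
  · push Not at ht
    have hc : Nat.card K = 2 := by
      rw [Nat.card_eq_two_iff]
      refine ⟨0, 1, zero_ne_one, ?_⟩
      ext x
      by_cases hx : x = 0
      · simp [hx]
      · simp [ht x hx]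
    have hd := h2 hc
    obtain ⟨w, hw⟩ := ex (by omega)
    obtain ⟨a, ha⟩ := qrc_caseB he G hd hG
    refine ⟨a, fun v => ?_⟩
    by_cases hv : v ∈ Submodule.span K {e}
    · have hwv : w + v ∉ Submodule.span K {e} := fun h =>
        hw ((Submodule.add_mem_iff_left _ hv).1 h)
      have h3 := ha _ hwv
      rw [map_add, ha w hw, smul_add] at h3
      exact add_left_cancel h3
    · exact ha v hv

/-- Let `U` and `V` be finite-dimensional vector spaces over a field
`K`, with `dim V ≥ 2` if `K` has more than 2 elements and `dim V ≥ 3` if `K` has exactly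
2 elements. Then every quasi-range-compatible additive homomorphism
`F : L(U,V) → V` is local. -/
theorem quasi_range_compatible_hom_on_full_space_is_local
    (K U V : Type*) [Field K]
    [AddCommGroup U] [Module K U] [FiniteDimensional K U]
    [AddCommGroup V] [Module K V] [FiniteDimensional K V]
    (h1 : 2 < Cardinal.mk K → 2 ≤ Module.finrank K V)
    (h2 : Nat.card K = 2 → 3 ≤ Module.finrank K V)
    (F : (U →ₗ[K] V) →+ V)
    (hq : ∃ D : Submodule K V, Module.finrank K D = 1 ∧
      ∀ s : U →ₗ[K] V, ¬ D ≤ LinearMap.range s → F s ∈ LinearMap.range s) :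
    ∃ x : U, ∀ s : U →ₗ[K] V, F s = s x := by
  obtain ⟨D, hD1, hD⟩ := hq
  obtain ⟨e, he, hDe⟩ : ∃ e : V, e ≠ 0 ∧ D = Submodule.span K {e} := by
    obtain ⟨⟨e, heD⟩, he0, hs⟩ := finrank_eq_one_iff'.1 hD1
    refine ⟨e, fun h => he0 (Subtype.ext h), le_antisymm ?_ ?_⟩
    · intro x hx
      obtain ⟨c, hc⟩ := hs ⟨x, hx⟩
      exact Submodule.mem_span_singleton.2 ⟨c, congrArg Subtype.val hc⟩
    · rw [Submodule.span_singleton_le_iff_mem]; exact heD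
  subst hDe
  have key : ∀ f : U →ₗ[K] K, ∃ a : K, ∀ v, F (f.smulRight v) = a • v := by
    intro f
    refine qrc_scal h1 h2 he
      (AddMonoidHom.mk' (fun v => F (f.smulRight v)) ?_) ?_
    · intro v w
      rw [← map_add]
      congr 1
      ext u
      simp
    · intro v hv
      have hr : LinearMap.range (f.smulRight v) ≤ Submodule.span K {v} := by
        rintro _ ⟨u, rfl⟩
        exact Submodule.mem_span_singleton.2 ⟨f u, by simp⟩
      have := hD (f.smulRight v) (by
        intro hle
        have hev := hr (hle (Submodule.mem_span_singleton_self e))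
        obtain ⟨c, hc⟩ := Submodule.mem_span_singleton.1 hev
        apply hv
        have hc0 : c ≠ 0 := by
          rintro rfl
          exact he (by simpa using hc.symm)
        rw [Submodule.mem_span_singleton]
        exact ⟨c⁻¹, by rw [← hc, smul_smul, inv_mul_cancel₀ hc0, one_smul]⟩)
      obtain ⟨a, ha⟩ := Submodule.mem_span_singleton.1 (hr this)
      exact ⟨a, ha.symm⟩
  choose l hl using key
  let L : Module.Dual K (Module.Dual K U) :=
    { toFun := l
      map_add' := by
        intro f g
        apply smul_left_injective K he
        change l (f + g) • e = (l f + l g) • e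
        rw [← hl, add_smul, ← hl, ← hl, ← map_add]
        congr 1
        ext u
        simp [add_smul]
      map_smul' := by
        intro c f
        apply smul_left_injective K he
        change l (c • f) • e = (c * l f) • e
        rw [← hl, mul_comm, mul_smul, ← hl]
        congr 1
        ext u
        simp [smul_smul, mul_comm] }
  refine ⟨(Module.evalEquiv K U).symm L, fun s => ?_⟩
  have hx : ∀ f : Module.Dual K U, f ((Module.evalEquiv K U).symm L) = l f := by
    intro f
    rw [Module.apply_evalEquiv_symm_apply]
    rfl
  generalize (Module.evalEquiv K U).symm L = x at hx
  let b := Module.finBasis K U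
  have hs : s = ∑ i, (b.coord i).smulRight (s (b i)) := by
    ext u
    conv_lhs => rw [← b.sum_repr u, map_sum]
    rw [LinearMap.sum_apply]
    refine Finset.sum_congr rfl fun i _ => ?_
    rw [map_smul, LinearMap.smulRight_apply, Module.Basis.coord_apply]
  have hs2 : s x = ∑ i, (b.coord i).smulRight (s (b i)) x := by
    conv_lhs => rw [hs]
    simp
  rw [hs2]
  conv_lhs => rw [hs]
  rw [map_sum]
  refine Finset.sum_congr rfl fun i _ => ?_
  rw [hl, LinearMap.smulRight_apply, hx]
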